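/- Fix δ > 0. Let b : ℕ → ℕ be monotone nondecreasing with b(x) → ∞, and for participants i and j let T_i, T_j : ℕ → ℝ satisfy T_p(k+1) ≥ T_p(k) + δ for all k. Define D_p(x) = T_p(b(x)). Then delivery-based ordering achieves limited-horizon response time fairness with horizon δ: for every trigger point x ∈ ℕ and all response times r_i, r_j with 0 < r_i, r_i < δ, and r_i < r_j, we have DC_{D_i}(D_i(x) + r_i) < DC_{D_j}(D_j(x) + r_j) in the lexicographic order on ℕ ×ₗ ℝ. -/

import Mathlib

/-!
A trade of participant `i` with response time below `δ` is submitted before the batch following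
that of `x` can be delivered, so the last point delivered to `i` at that time is the last point of
the batch of `x`, and the time elapsed since its delivery is exactly the response time `ri`
(`batch_lastIdx`). Every point of that batch has also been delivered to `j` when `j` submits, so the
first component of the clock of `j` is at least that of `i`; if the two components agree, the
second components are `ri < rj`.
-/

/-- The index of the latest market data point delivered by time `t`:
the largest `x` with `D x ≤ t`. -/
noncomputable def lastIdx (D : ℕ → ℝ) (t : ℝ) : ℕ := sSup {x : ℕ | D x ≤ t}

/-- The delivery clock at time `t`: the pair consisting of the id of the
latest delivered data point and the time elapsed since its delivery,
ordered lexicographically. -/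
noncomputable def DC (D : ℕ → ℝ) (t : ℝ) : ℕ ×ₗ ℝ :=
  toLex (lastIdx D t, t - D (lastIdx D t))

lemma add_le_of_lt_batch {δ : ℝ} (hδ : 0 < δ) {T : ℕ → ℝ} (hT : ∀ k : ℕ, T k + δ ≤ T (k + 1))
    {m n : ℕ} (h : m < n) : T m + δ ≤ T n :=
  (hT m).trans (monotone_nat_of_le_succ (fun k => by linarith [hT k]) h)

/-- The supremum defining `lastIdx` is attained: the set of delivered points is bounded, because
batch delivery times grow at least linearly and `b` tends to infinity. This rules out the junk value of
`sSup` on `ℕ`. -/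
lemma isGreatest_lastIdx {δ : ℝ} (hδ : 0 < δ) {b : ℕ → ℕ}
    (hb_tend : Filter.Tendsto b Filter.atTop Filter.atTop)
    {T : ℕ → ℝ} (hT : ∀ k : ℕ, T k + δ ≤ T (k + 1)) {x : ℕ} {t : ℝ} (hx : T (b x) ≤ t) :
    IsGreatest {y : ℕ | T (b y) ≤ t} (lastIdx (fun y => T (b y)) t) := by
  have hlin : ∀ k : ℕ, T 0 + k * δ ≤ T k := by
    intro k
    induction k with
    | zero => simp
    | succ k ih => push_cast; linarith [hT k]
  have hT_tend : Filter.Tendsto T Filter.atTop Filter.atTop :=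
    Filter.tendsto_atTop_mono hlin (Filter.tendsto_atTop_add_const_left _ _
      (tendsto_natCast_atTop_atTop.atTop_mul_const hδ))
  obtain ⟨N, hN⟩ := Filter.eventually_atTop.1
    ((hT_tend.comp hb_tend).eventually (Filter.eventually_gt_atTop t))
  have hbdd : BddAbove {y : ℕ | T (b y) ≤ t} :=
    ⟨N, fun y hy => le_of_not_ge fun h => absurd hy (not_le.2 (hN y h))⟩
  exact ⟨Nat.sSup_mem ⟨x, hx⟩ hbdd, fun y hy => le_csSup hbdd hy⟩

/-- Within the horizon `δ`, the last delivered point still belongs to the batch of the trigger. -/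
lemma batch_lastIdx {δ : ℝ} (hδ : 0 < δ) {b : ℕ → ℕ} (hb : Monotone b)
    (hb_tend : Filter.Tendsto b Filter.atTop Filter.atTop)
    {T : ℕ → ℝ} (hT : ∀ k : ℕ, T k + δ ≤ T (k + 1)) {x : ℕ} {r : ℝ} (hr : 0 < r) (hrδ : r < δ) :
    b (lastIdx (fun y => T (b y)) (T (b x) + r)) = b x := by
  have hx : T (b x) ≤ T (b x) + r := by linarith
  have hg := isGreatest_lastIdx hδ hb_tend hT hx
  refine le_antisymm (le_of_not_gt fun h => ?_) (hb (hg.2 hx))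
  have hmem : T (b (lastIdx (fun y => T (b y)) (T (b x) + r))) ≤ T (b x) + r := hg.1
  linarith [add_le_of_lt_batch hδ hT h]

/-- Core DBO correctness guarantee (limited-horizon response time fairness):
with batched delivery (batch map `b`, batch delivery times `Ti, Tj` separated
by at least `δ`), any trade whose response time is below the horizon `δ` is
ordered ahead of every slower competing trade with the same trigger point. -/
theorem DBO_achieves_LRTF (δ : ℝ) (hδ : 0 < δ)
    (b : ℕ → ℕ) (hb : Monotone b)
    (hb_tend : Filter.Tendsto b Filter.atTop Filter.atTop)
    (Ti Tj : ℕ → ℝ)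
    (hTi : ∀ k : ℕ, Ti k + δ ≤ Ti (k + 1))
    (hTj : ∀ k : ℕ, Tj k + δ ≤ Tj (k + 1))
    (x : ℕ) (ri rj : ℝ) (hri : 0 < ri) (hriδ : ri < δ) (hij : ri < rj) :
    DC (fun y => Ti (b y)) (Ti (b x) + ri) <
      DC (fun y => Tj (b y)) (Tj (b x) + rj) := by
  have hx : Tj (b x) ≤ Tj (b x) + rj := by linarith
  have hbi := batch_lastIdx hδ hb hb_tend hTi (x := x) hri hriδ
  have hg := isGreatest_lastIdx hδ hb_tend hTj hx
  have hle : lastIdx (fun y => Ti (b y)) (Ti (b x) + ri) ≤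
      lastIdx (fun y => Tj (b y)) (Tj (b x) + rj) :=
    hg.2 (show Tj (b _) ≤ _ by rw [hbi]; exact hx)
  unfold DC
  rw [Prod.Lex.toLex_lt_toLex]
  refine hle.lt_or_eq.imp id fun heq => ⟨heq, ?_⟩
  dsimp only at heq ⊢
  rw [← heq, hbi]
  linarith
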